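/- Let A be an M×N integer matrix all of whose entries are -1, 0, or 1, such that every row has at most p nonzero entries, and let b be a vector in ℝ^M. If the equation Ax = b has a solution over ℝ, then it has a solution x with ‖x‖_∞ ≤ min{M,N} · p^(min{M,N}−1) · ‖b‖_∞. -/

import Mathlib

theorem abs_det_le_prod_aux {n : Type*} [Fintype n] [DecidableEq n] (B : Matrix n n ℝ) :
    |B.det| ≤ ∏ i, ∑ j, |B i j| := by
  rw [← Matrix.det_transpose, Matrix.det_apply, Finset.prod_univ_sum, Fintype.piFinset_univ]
  refine (Finset.abs_sum_le_sum_abs _ _).trans ?_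
  have h1 : ∀ σ : Equiv.Perm n, |Equiv.Perm.sign σ • ∏ i, B.transpose (σ i) i|
      = ∏ i, |B i (σ i)| := by
    intro σ
    rw [← Finset.abs_prod]
    rcases Int.units_eq_one_or (Equiv.Perm.sign σ) with h | h <;> simp [h, Matrix.transpose_apply]
  rw [Finset.sum_congr rfl (fun σ _ => h1 σ)]
  have h2 := Finset.sum_map Finset.univ
    (⟨fun σ : Equiv.Perm n => (σ : n → n), DFunLike.coe_injective⟩ : Equiv.Perm n ↪ (n → n))
    (fun f => ∏ i, |B i (f i)|)
  simp only [Function.Embedding.coeFn_mk] at h2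
  rw [← h2]
  exact Finset.sum_le_sum_of_subset_of_nonneg (Finset.subset_univ _)
    (fun f _ _ => Finset.prod_nonneg fun i _ => abs_nonneg _)

theorem square_bound_aux {n : Type*} [Fintype n] [DecidableEq n] (p : ℕ) (D : Matrix n n ℤ)
    (hrow : ∀ i, ∑ j, |((D i j : ℤ) : ℝ)| ≤ p)
    (hu : IsUnit (D.map (Int.cast : ℤ → ℝ))) (y c : n → ℝ) (β : ℝ)
    (hy : (D.map (Int.cast : ℤ → ℝ)).mulVec y = c) (hc : ∀ i, |c i| ≤ β) (k : n) :
    |y k| ≤ (Fintype.card n : ℝ) * (p : ℝ) ^ (Fintype.card n - 1) * β := by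
  set E := D.map (Int.cast : ℤ → ℝ) with hE
  have hdet : E.det = ((D.det : ℤ) : ℝ) := by
    have := (Int.castRingHom ℝ).map_det D
    simpa [hE] using this.symm
  have hd0 : E.det ≠ 0 := ((Matrix.isUnit_iff_isUnit_det E).1 hu).ne_zero
  have hd1 : 1 ≤ |E.det| := by
    rw [hdet] at hd0 ⊢
    have : D.det ≠ 0 := by exact_mod_cast hd0
    exact_mod_cast Int.one_le_abs this
  have hadj : ∀ i j, |E.adjugate i j| ≤ (p : ℝ) ^ (Fintype.card n - 1) := by
    intro i j
    rw [Matrix.adjugate_apply]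
    refine (abs_det_le_prod_aux _).trans ?_
    rw [← Finset.mul_prod_erase _ _ (Finset.mem_univ j)]
    have h1 : ∑ l, |(E.updateRow j (Pi.single i 1)) j l| = 1 := by
      simp [Pi.single_apply, apply_ite abs]
    rw [h1, one_mul, ← Finset.card_univ, ← Finset.card_erase_of_mem (Finset.mem_univ j)]
    rw [← Finset.prod_const]
    refine Finset.prod_le_prod (fun l _ => Finset.sum_nonneg fun _ _ => abs_nonneg _) ?_
    intro l hl
    rw [Matrix.updateRow_ne (Finset.ne_of_mem_erase hl)]
    exact hrow l
  have hkey : E.adjugate.mulVec c = E.det • y := by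
    rw [← hy, Matrix.mulVec_mulVec, Matrix.adjugate_mul, Matrix.smul_mulVec, Matrix.one_mulVec]
  have hk : E.det * y k = ∑ i, E.adjugate k i * c i := by
    have := congrFun hkey k
    simpa [Matrix.mulVec, dotProduct] using this.symm
  have hp : (0 : ℝ) ≤ (p : ℝ) ^ (Fintype.card n - 1) := by positivity
  calc |y k| ≤ |E.det| * |y k| := le_mul_of_one_le_left (abs_nonneg _) hd1
    _ = |∑ i, E.adjugate k i * c i| := by rw [← abs_mul, hk]
    _ ≤ ∑ i, |E.adjugate k i * c i| := Finset.abs_sum_le_sum_abs _ _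
    _ ≤ ∑ _i : n, (p : ℝ) ^ (Fintype.card n - 1) * β := by
        refine Finset.sum_le_sum fun i _ => ?_
        rw [abs_mul]
        exact mul_le_mul (hadj k i) (hc i) (abs_nonneg _) hp
    _ = _ := by simp [mul_assoc]


/-- **Bounded solutions of integer linear systems.**
If `A` is an `M × N` integer matrix all of whose entries lie in `{-1, 0, 1}`,
with at most `p` nonzero entries in every row, and `b : ℝ^M` is such that
`A x = b` has a real solution, then it has a solution with
`‖x‖_∞ ≤ min{M,N} · p^(min{M,N} - 1) · ‖b‖_∞`.
(The norms on `Fin N → ℝ` and `Fin M → ℝ` are the sup norms.) -/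
theorem bounded_solution_of_pm_one_matrix
    (M N p : ℕ) (A : Matrix (Fin M) (Fin N) ℤ)
    (hentries : ∀ i j, A i j = -1 ∨ A i j = 0 ∨ A i j = 1)
    (hrows : ∀ i, (Finset.univ.filter fun j => A i j ≠ 0).card ≤ p)
    (b : Fin M → ℝ)
    (hsol : ∃ x : Fin N → ℝ, (A.map (Int.cast : ℤ → ℝ)).mulVec x = b) :
    ∃ x : Fin N → ℝ, (A.map (Int.cast : ℤ → ℝ)).mulVec x = b ∧
      ‖x‖ ≤ (min M N : ℝ) * (p : ℝ) ^ (min M N - 1) * ‖b‖ := by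
  classical
  rcases Nat.eq_zero_or_pos p with hp0 | hp
  · subst hp0
    have hA : A = 0 := by
      ext i j
      by_contra h
      have h0 := Finset.card_eq_zero.1 (Nat.le_zero.1 (hrows i))
      have : j ∈ Finset.univ.filter fun j => A i j ≠ 0 := by simpa using h
      rw [h0] at this
      simp at this
    obtain ⟨x, hx⟩ := hsol
    subst hx
    subst hA
    refine ⟨0, ?_, ?_⟩
    · simp
    · rw [norm_zero]; positivity
  set B := A.map (Int.cast : ℤ → ℝ) with hB
  obtain ⟨κ, a, ha, hspan, hli⟩ := exists_linearIndependent' ℝ B.col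
  haveI : Finite κ := Finite.of_injective a ha
  letI : Fintype κ := Fintype.ofFinite κ
  set C := B.submatrix id a with hC
  have hCcol : C.col = B.col ∘ a := rfl
  -- solution supported on the chosen columns
  obtain ⟨y, hy⟩ : ∃ y : κ → ℝ, C.mulVec y = b := by
    obtain ⟨x, hx⟩ := hsol
    have hb : b ∈ Submodule.span ℝ (Set.range B.col) := by
      rw [← Matrix.range_mulVecLin]
      exact ⟨x, hx⟩
    rw [← hspan, ← hCcol, ← Matrix.range_mulVecLin] at hb
    exact hb
  obtain ⟨κ', a', ha', hspan', hli'⟩ := exists_linearIndependent' ℝ C.row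
  haveI : Finite κ' := Finite.of_injective a' ha'
  letI : Fintype κ' := Fintype.ofFinite κ'
  have hcard : Fintype.card κ = Fintype.card κ' := by
    have h1 : C.rank = Fintype.card κ := by
      rw [Matrix.rank_eq_finrank_span_cols]
      exact finrank_span_eq_card hli
    have h2 : C.rank = Fintype.card κ' := by
      rw [Matrix.rank_eq_finrank_span_row, ← hspan']
      exact finrank_span_eq_card hli'
    rw [← h1, h2]
  obtain ⟨e⟩ := Fintype.card_eq.1 hcard
  set D := A.submatrix (a' ∘ e) a with hD
  have hu : IsUnit (D.map (Int.cast : ℤ → ℝ)) := by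
    rw [← Matrix.linearIndependent_rows_iff_isUnit]
    exact hli'.comp e e.injective
  have hrow : ∀ i, ∑ j, |((D i j : ℤ) : ℝ)| ≤ p := by
    intro i
    have hab : ∀ j, |((D i j : ℤ) : ℝ)| = if A (a' (e i)) (a j) ≠ 0 then 1 else 0 := by
      intro j
      rcases hentries (a' (e i)) (a j) with h | h | h <;> simp [hD, h]
    simp only [hab]
    rw [Finset.sum_boole]
    refine Nat.cast_le.2 (le_trans ?_ (hrows (a' (e i))))
    refine Finset.card_le_card_of_injOn a ?_ ha.injOn
    intro j hj
    simpa using hj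
  have hDy : (D.map (Int.cast : ℤ → ℝ)).mulVec y = b ∘ a' ∘ e := by
    ext i
    exact congrFun hy (a' (e i))
  have hbound := square_bound_aux p D hrow hu y _ ‖b‖ hDy (fun i => norm_le_pi_norm b _)
  have hrM : Fintype.card κ ≤ M := by
    rw [hcard]; simpa using Fintype.card_le_of_injective a' ha'
  have hrN : Fintype.card κ ≤ N := by
    simpa using Fintype.card_le_of_injective a ha
  have hmin : Fintype.card κ ≤ min M N := le_min hrM hrN
  have hp1 : (1 : ℝ) ≤ p := by exact_mod_cast hp
  have hle : (Fintype.card κ : ℝ) * (p : ℝ) ^ (Fintype.card κ - 1) * ‖b‖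
      ≤ (min M N : ℝ) * (p : ℝ) ^ (min M N - 1) * ‖b‖ := by
    have h1 : (Fintype.card κ : ℝ) ≤ (min M N : ℝ) := by
      rw [← Nat.cast_min]; exact_mod_cast hmin
    have h2 : (p : ℝ) ^ (Fintype.card κ - 1) ≤ (p : ℝ) ^ (min M N - 1) :=
      pow_le_pow_right₀ hp1 (Nat.sub_le_sub_right hmin 1)
    gcongr
  have hnn : (0 : ℝ) ≤ (min M N : ℝ) * (p : ℝ) ^ (min M N - 1) * ‖b‖ :=
    le_trans (by positivity) hle
  refine ⟨Function.extend a y 0, ?_, ?_⟩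
  · rw [← hy]
    ext i
    symm
    refine Fintype.sum_of_injective a ha _ _ ?_ ?_
    · intro j hj
      rw [Function.extend_apply' _ _ _ (by simpa using hj)]
      simp
    · intro k
      rw [ha.extend_apply]
      rfl
  · rw [pi_norm_le_iff_of_nonneg hnn]
    intro j
    by_cases hj : ∃ k, a k = j
    · obtain ⟨k, rfl⟩ := hj
      rw [ha.extend_apply, Real.norm_eq_abs]
      exact (hbound k).trans hle
    · rw [Function.extend_apply' _ _ _ hj]
      simpa using hnn
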